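/- arXiv:1901.05396 — 3 statements merged into one kernel-verified Lean document; each statement's English description precedes it below -/
import Mathlib

section
/- Let (X,𝒰) be a uniform space, B ⊆ X, n ∈ ℕ, and let U be a symmetric entourage. If the set X \ Uⁿ[B] is uniformly discrete, then the set X \ Uⁿ⁺¹[B] is uniformly isolated. -/
/-- A relation is symmetric: `(x,y) ∈ U ↔ (y,x) ∈ U`. -/
def SymmRel {X : Type*} (U : Set (X × X)) : Prop :=
  ∀ x y : X, (x, y) ∈ U ↔ (y, x) ∈ U

/-- The image `U[A] = ⋃ x ∈ A, U[x]` of a set under a relation. -/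
def relImage {X : Type*} (U : Set (X × X)) (A : Set X) : Set X :=
  ⋃ x ∈ A, UniformSpace.ball x U

/-- `relIter U n` is the `(n+1)`-fold composition `Uⁿ⁺¹ = U ∘ ⋯ ∘ U`;
so as `n` ranges over `ℕ`, all positive powers `Uⁿ` occur. -/
def relIter {X : Type*} (U : Set (X × X)) : ℕ → Set (X × X)
  | 0 => U
  | n + 1 => SetRel.comp U (relIter U n)

/-- `A` is uniformly isolated: there is an entourage `V` with `V[x] = {x}` for all `x ∈ A`. -/
def UnifIsolated {X : Type*} [UniformSpace X] (A : Set X) : Prop :=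
  ∃ V ∈ uniformity X, ∀ x ∈ A, UniformSpace.ball x V = {x}

/-- `A` is uniformly discrete: there is an entourage `V` with `V[x] ∩ A = {x}`
for all `x ∈ A`. -/
def UnifDiscrete {X : Type*} [UniformSpace X] (A : Set X) : Prop :=
  ∃ V ∈ uniformity X, ∀ x ∈ A, UniformSpace.ball x V ∩ A = {x}

/-!
A point `y` with `(y, x) ∈ U` cannot lie in `A` unless `x` lies in `U[A]`. Hence if `x ∉ U[A]`, the
whole `U⁻¹`-neighbourhood of `x` stays in the complement of `A`; when that complement is discrete
at scale `V`, the entourage `V ∩ U⁻¹` isolates `x`. For `A = Uⁿ[B]` we have `U[A] = Uⁿ⁺¹[B]`.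
-/

open UniformSpace

open scoped SetRel Uniformity

section Relation

variable {X : Type*}

theorem relImage_eq_image (U : SetRel X X) (A : Set X) : relImage U A = U.image A := by
  ext y
  simp [relImage, ball]

theorem relIter_succ_eq_comp (U : SetRel X X) (n : ℕ) : relIter U (n + 1) = relIter U n ○ U := by
  induction n with
  | zero => rfl
  | succ n ih =>
    calc U ○ relIter U (n + 1) = U ○ (relIter U n ○ U) := by rw [ih]
      _ = (U ○ relIter U n) ○ U := (SetRel.comp_assoc _ _ _).symm

theorem relImage_relIter_succ (U : SetRel X X) (n : ℕ) (B : Set X) :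
    relImage (relIter U (n + 1)) B = relImage U (relImage (relIter U n) B) := by
  simp only [relImage_eq_image, relIter_succ_eq_comp, SetRel.image_comp]

theorem ball_inv_subset_univ_diff {U : SetRel X X} {A : Set X} {x : X}
    (hx : x ∈ Set.univ \ relImage U A) : ball x U.inv ⊆ Set.univ \ A :=
  fun _ hxy => ⟨trivial, fun hyA => hx.2 (Set.mem_biUnion hyA hxy)⟩

end Relation

section Uniform

variable {X : Type*} [UniformSpace X]

theorem UnifDiscrete.unifIsolated_of_ball_subset {A C : Set X} {W : SetRel X X}
    (hA : UnifDiscrete A) (hW : W ∈ 𝓤 X) (hWA : ∀ x ∈ C, ball x W ⊆ A) : UnifIsolated C := by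
  obtain ⟨V, hV, hVA⟩ := hA
  refine ⟨V ∩ W, Filter.inter_mem hV hW, fun x hx => ?_⟩
  have hxA : x ∈ A := hWA x hx (mem_ball_self x hW)
  refine Set.Subset.antisymm ?_
    (Set.singleton_subset_iff.2 (mem_ball_self x (Filter.inter_mem hV hW)))
  calc ball x (V ∩ W) = ball x V ∩ ball x W := ball_inter x V W
    _ ⊆ ball x V ∩ A := Set.inter_subset_inter_right _ (hWA x hx)
    _ = {x} := hVA x hxA

theorem UnifDiscrete.unifIsolated_univ_diff_relImage {A : Set X} {U : SetRel X X}
    (hA : UnifDiscrete (Set.univ \ A)) (hU : U ∈ 𝓤 X) :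
    UnifIsolated (Set.univ \ relImage U A) :=
  hA.unifIsolated_of_ball_subset (symm_le_uniformity hU) fun _ hx => ball_inv_subset_univ_diff hx

theorem stmt7_general (B : Set X) (n : ℕ) {U : SetRel X X} (hU : U ∈ 𝓤 X)
    (hd : UnifDiscrete (Set.univ \ relImage (relIter U n) B)) :
    UnifIsolated (Set.univ \ relImage (relIter U (n + 1)) B) := by
  rw [relImage_relIter_succ]
  exact hd.unifIsolated_univ_diff_relImage hU

end Uniform

theorem stmt7 {X : Type*} [UniformSpace X] (B : Set X) (n : ℕ)
    (U : Set (X × X)) (hU : U ∈ uniformity X) (hsymm : SymmRel U)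
    (hd : UnifDiscrete (Set.univ \ relImage (relIter U n) B)) :
    UnifIsolated (Set.univ \ relImage (relIter U (n + 1)) B) :=
  stmt7_general B n hU hd
end

section
/- Let (X,𝒰) be a uniform space such that for each symmetric entourage U ∈ 𝒰 there exist a Bourbaki bounded set B ⊆ X and n ∈ ℕ with X \ Uⁿ[B] uniformly isolated. Then for every uniformly continuous function f : X → ℝ there exists k ≥ 0 such that the set {x ∈ X : |f(x)| ≥ k} is uniformly isolated. -/
/-- `A` is Bourbaki bounded in `X`: every uniformly continuous real-valued
function on `X` is bounded on `A`. -/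
def BourbakiBounded {X : Type*} [UniformSpace X] (A : Set X) : Prop :=
  ∀ f : X → ℝ, UniformContinuous f → ∃ M : ℝ, ∀ x ∈ A, |f x| ≤ M

/-!
Apply the hypothesis to the entourage `U = {(x, y) | |f x - f y| < 1}`. Along a chain of `m` steps
in `U` the function `f` changes by less than `m`, so `f` is bounded on `Uᵐ[B]` because it is bounded
on `B`. Hence the points where `|f|` is large lie outside `Uᵐ[B]`.
-/

theorem UnifIsolated.mono {X : Type*} [UniformSpace X] {A B : Set X} (hB : UnifIsolated B)
    (hAB : A ⊆ B) : UnifIsolated A := by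
  obtain ⟨V, hV, hball⟩ := hB
  exact ⟨V, hV, fun x hx => hball x (hAB hx)⟩

section Dist

variable {X Y : Type*} [PseudoMetricSpace Y]

theorem symmRel_setOf_dist_lt (f : X → Y) (ε : ℝ) :
    SymmRel {p : X × X | dist (f p.1) (f p.2) < ε} := by
  intro x y
  simp only [Set.mem_ofPred_eq, dist_comm]

variable {f : X → Y} {U : Set (X × X)} {ε : ℝ}

theorem dist_lt_of_mem_relIter (hU : ∀ x y, (x, y) ∈ U → dist (f x) (f y) < ε) {n : ℕ} {x y : X}
    (hxy : (x, y) ∈ relIter U n) : dist (f x) (f y) < (n + 1) * ε := by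
  induction n generalizing x with
  | zero => simpa using hU x y hxy
  | succ n ih =>
    obtain ⟨z, hxz, hzy⟩ := hxy
    calc
      dist (f x) (f y) ≤ dist (f x) (f z) + dist (f z) (f y) := dist_triangle ..
      _ < ε + (n + 1) * ε := add_lt_add (hU x z hxz) (ih hzy)
      _ = ((n + 1 : ℕ) + 1) * ε := by push_cast; ring

theorem dist_lt_of_mem_relImage_relIter (hU : ∀ x y, (x, y) ∈ U → dist (f x) (f y) < ε)
    {B : Set X} {c : Y} {M : ℝ} (hB : ∀ b ∈ B, dist (f b) c ≤ M) {n : ℕ} {x : X}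
    (hx : x ∈ relImage (relIter U n) B) : dist (f x) c < (n + 1) * ε + M := by
  obtain ⟨b, hb, hbx⟩ := Set.mem_iUnion₂.mp hx
  calc
    dist (f x) c ≤ dist (f b) (f x) + dist (f b) c := dist_triangle_left ..
    _ < (n + 1) * ε + M := add_lt_add_of_lt_of_le (dist_lt_of_mem_relIter hU hbx) (hB b hb)

end Dist

theorem stmt8 {X : Type*} [UniformSpace X]
    (h : ∀ U ∈ uniformity X, SymmRel U →
      ∃ (B : Set X) (n : ℕ), BourbakiBounded B ∧
        UnifIsolated (Set.univ \ relImage (relIter U n) B)) :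
    ∀ f : X → ℝ, UniformContinuous f →
      ∃ k : ℝ, 0 ≤ k ∧ UnifIsolated {x : X | k ≤ |f x|} := by
  intro f hf
  obtain ⟨B, n, hB, hisolated⟩ := h {p | dist (f p.1) (f p.2) < 1}
    (hf (Metric.dist_mem_uniformity one_pos)) (symmRel_setOf_dist_lt f 1)
  obtain ⟨M, hM⟩ := hB f hf
  have abs_lt_on_image : ∀ x ∈ relImage (relIter {p | dist (f p.1) (f p.2) < 1} n) B,
      |f x| < n + 1 + M := by
    simp only [← Real.dist_0_eq_abs] at hM ⊢
    intro x hx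
    simpa only [mul_one] using dist_lt_of_mem_relImage_relIter (fun _ _ hxy => hxy) hM hx
  -- If `B` is empty, `M` may be negative.
  refine ⟨max 0 (n + 1 + M), le_max_left .., hisolated.mono fun x hx => ⟨trivial, fun hxB => ?_⟩⟩
  exact (abs_lt_on_image x hxB).not_ge ((le_max_right ..).trans hx)
end

section
/- Let (X,𝒰) be a uniform space such that for every symmetric entourage U ∈ 𝒰 there exist a Bourbaki bounded set B ⊆ X and n ∈ ℕ with X \ Uⁿ[B] uniformly isolated. Suppose further that there is a sequence (Uₙ)ₙ of symmetric entourages such that: (1) every infinite uniformly isolated set in X contains an infinite set which is uniformly Uₙ-isolated for some n; and (2) for every Bourbaki bounded set B ⊆ X and every entourage U there are n, m ∈ ℕ such that the set I = Uₙ[B] \ Uᵐ[B] is uniformly isolated and Uₙ[I] ⊆ I. Then there exists a Bourbaki bounded set F ⊆ X such that for each entourage U ∈ 𝒰 there is n ∈ ℕ with X \ Uⁿ[F] uniformly isolated. -/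
/-!
Let `Dₙ = U₀ ∩ ⋯ ∩ Uₙ` and let `Wₙ` be the set of points that `Dₙ` does not isolate. By (1),
a uniformly isolated set meets some `Wₙ` in a finite set, so by the main hypothesis every
uniformly continuous real function is bounded on some `Wₙ`. Consequently finite sets `Eₙ ⊆ Wₙ` have
a Bourbaki bounded union, and for each entourage the sets `Wₙ` eventually meet only finitely many
chain components. Take for `Eₖ` representatives in some `W_q`, with `q ≥ k`, of the `Dₖ`-chain
components meeting `W_q`, and let `F` be the union of the `Eₖ`.

In (2) a point of `I` would be `Uₙ`-related to a point of `B`, which is not in `I`; so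
`I` is empty and `Uₙ[B] ⊆ Vᵐ[B]`. It follows that the set `⋃ₖ Vᵏ[F]` is closed under some `Dₙ`, so
it contains a whole `W_q`. The number of `V`-steps needed to reach a point from `F` changes by at
most one along `V`, hence lies at distance at most one from a uniformly continuous function, so it
is bounded on some `W_q`. That is, `W_q ⊆ Vⁿ[F]`.
-/

open Filter Set UniformSpace Uniformity
open scoped SetRel

section Relations

variable {X : Type*} {V W : Set (X × X)} {F : Set X} {x y z : X}

lemma mem_relImage : y ∈ relImage V F ↔ ∃ x ∈ F, (x, y) ∈ V := by
  simp [relImage, ball]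

lemma relImage_mono_left (h : V ⊆ W) : relImage V F ⊆ relImage W F :=
  biUnion_mono subset_rfl fun x _ ↦ ball_mono h x

lemma relIter_mono_left (h : V ⊆ W) (n : ℕ) : relIter V n ⊆ relIter W n := by
  induction n with
  | zero => exact h
  | succ n ih => exact SetRel.comp_subset_comp h ih

lemma relIter_monotone (hV : ∀ x, (x, x) ∈ V) : Monotone (relIter V) :=
  monotone_nat_of_le_succ fun _ p hp ↦ ⟨p.1, hV p.1, hp⟩

lemma mem_relIter_succ_of_mem_of_mem {n : ℕ} (hxy : (x, y) ∈ relIter V n) (hyz : (y, z) ∈ V) :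
    (x, z) ∈ relIter V (n + 1) := by
  induction n generalizing x with
  | zero => exact ⟨y, hxy, hyz⟩
  | succ n ih =>
    obtain ⟨w, hxw, hwy⟩ := hxy
    exact ⟨w, hxw, ih hwy⟩

lemma abs_sub_le_of_mem_relIter {f : X → ℝ} (hf : ∀ x y, (x, y) ∈ V → |f x - f y| ≤ 1) {n : ℕ}
    (hxy : (x, y) ∈ relIter V n) : |f x - f y| ≤ n + 1 := by
  induction n generalizing x with
  | zero => simpa using hf x y hxy
  | succ n ih =>
    obtain ⟨w, hxw, hwy⟩ := hxy
    calc |f x - f y| ≤ |f x - f w| + |f w - f y| := abs_sub_le _ _ _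
      _ ≤ 1 + (n + 1) := add_le_add (hf x w hxw) (ih hwy)
      _ = (n + 1 : ℕ) + 1 := by push_cast; ring

lemma subset_relImage_relIter (hV : ∀ x, (x, x) ∈ V) (n : ℕ) : F ⊆ relImage (relIter V n) F :=
  fun x hx ↦ mem_relImage.2 ⟨x, hx, relIter_monotone hV n.zero_le (hV x)⟩

lemma mem_relImage_relIter_succ {n : ℕ} (hx : x ∈ relImage (relIter V n) F) (hxy : (x, y) ∈ V) :
    y ∈ relImage (relIter V (n + 1)) F := by
  obtain ⟨a, ha, hax⟩ := mem_relImage.1 hx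
  exact mem_relImage.2 ⟨a, ha, mem_relIter_succ_of_mem_of_mem hax hxy⟩

lemma relImage_iUnion_relImage_relIter_subset :
    relImage V (⋃ n, relImage (relIter V n) F) ⊆ ⋃ n, relImage (relIter V n) F := by
  intro y hy
  obtain ⟨x, hx, hxy⟩ := mem_relImage.1 hy
  obtain ⟨n, hn⟩ := mem_iUnion.1 hx
  exact mem_iUnion.2 ⟨n + 1, mem_relImage_relIter_succ hn hxy⟩

lemma relImage_relIter_subset_of_relImage_subset (hF : relImage V F ⊆ F) (n : ℕ) :
    relImage (relIter V n) F ⊆ F := by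
  induction n with
  | zero => exact hF
  | succ n ih =>
    intro y hy
    obtain ⟨x, hx, w, hxw, hwy⟩ := mem_relImage.1 hy
    exact ih (mem_relImage.2 ⟨w, hF (mem_relImage.2 ⟨x, hx, hxw⟩), hwy⟩)

lemma mem_iff_mem_of_eqvGen (hV : SymmRel V) (hF : relImage V F ⊆ F)
    (hxy : Relation.EqvGen (fun x y ↦ (x, y) ∈ V) x y) : x ∈ F ↔ y ∈ F := by
  induction hxy with
  | rel x y h =>
    exact ⟨fun hx ↦ hF (mem_relImage.2 ⟨x, hx, h⟩),
      fun hy ↦ hF (mem_relImage.2 ⟨y, hy, (hV x y).1 h⟩)⟩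
  | refl => rfl
  | symm _ _ _ ih => exact ih.symm
  | trans _ _ _ _ _ ih₁ ih₂ => exact ih₁.trans ih₂

lemma relImage_subset_of_relImage_diff_subset (hW : SymmRel W) {A : Set X} (hFA : F ⊆ A)
    (h : relImage W (relImage W F \ A) ⊆ relImage W F \ A) : relImage W F ⊆ A := by
  intro y hy
  by_contra hyA
  obtain ⟨x, hx, hxy⟩ := mem_relImage.1 hy
  exact (h (mem_relImage.2 ⟨y, ⟨hy, hyA⟩, (hW x y).1 hxy⟩)).2 (hFA hx)

lemma symmRel_symmetrize (V : SetRel X X) : SymmRel V.symmetrize :=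
  fun _ _ ↦ V.symmetrize.comm

lemma SymmRel.dissipate {U : ℕ → Set (X × X)} (hU : ∀ n, SymmRel (U n)) (n : ℕ) :
    SymmRel (dissipate U n) := fun x y ↦ by
  simp only [mem_dissipate, hU _ x y]

end Relations

section ChainLevel

variable {X : Type*} {V : Set (X × X)} {F : Set X} {x y : X}

/-- The number of `V`-steps needed to reach `x` from `F`, less one because `relIter V n` is the
`(n + 1)`-st power of `V`. Points that are not reached have level `0`, the infimum of `∅` in `ℕ`. -/
noncomputable def chainLevel (V : Set (X × X)) (F : Set X) (x : X) : ℕ :=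
  sInf {n | x ∈ relImage (relIter V n) F}

lemma mem_relImage_relIter_of_chainLevel_le (hV : ∀ x, (x, x) ∈ V)
    (hx : x ∈ ⋃ n, relImage (relIter V n) F) {k : ℕ} (hk : chainLevel V F x ≤ k) :
    x ∈ relImage (relIter V k) F :=
  relImage_mono_left (relIter_monotone hV hk)
    (Nat.sInf_mem (s := {n | x ∈ relImage (relIter V n) F}) (mem_iUnion.1 hx))

lemma chainLevel_le_add_one (hV : SymmRel V) (hxy : (x, y) ∈ V) :
    chainLevel V F y ≤ chainLevel V F x + 1 := by
  rcases Set.eq_empty_or_nonempty {n | y ∈ relImage (relIter V n) F} with hy | ⟨n, hn⟩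
  · simp [chainLevel, hy]
  · have hx : {n | x ∈ relImage (relIter V n) F}.Nonempty :=
      ⟨n + 1, mem_relImage_relIter_succ hn ((hV x y).1 hxy)⟩
    exact Nat.sInf_le (mem_relImage_relIter_succ (Nat.sInf_mem hx) hxy)

lemma abs_chainLevel_sub_le_one (hV : SymmRel V) (hxy : (x, y) ∈ V) :
    |(chainLevel V F x : ℝ) - chainLevel V F y| ≤ 1 := by
  have hyx : (chainLevel V F y : ℝ) ≤ chainLevel V F x + 1 := by
    exact_mod_cast chainLevel_le_add_one hV hxy
  have hxy : (chainLevel V F x : ℝ) ≤ chainLevel V F y + 1 := by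
    exact_mod_cast chainLevel_le_add_one hV ((hV x y).1 hxy)
  rw [abs_le]
  constructor <;> linarith

end ChainLevel

section LocalInfConvolution

variable {X : Type*} [PseudoMetricSpace X] {f : X → ℝ} {ε : ℝ} {x y : X}

/-- The inf-convolution of `f` with `2 / ε * dist`, restricted to the points within `ε`. It smooths
a function that varies by at most one at scale `ε`. The slope is chosen so that points at distance
at least `ε / 2` do not contribute to the infimum. -/
noncomputable def localInfConvolution (ε : ℝ) (f : X → ℝ) (x : X) : ℝ :=
  ⨅ y : Metric.ball x ε, (f y + 2 / ε * dist x y)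

lemma sub_one_le_add_dist (hε : 0 < ε) (hf : ∀ x y, dist x y < ε → |f x - f y| ≤ 1)
    (hxy : dist x y < ε) : f x - 1 ≤ f y + 2 / ε * dist x y := by
  have hfxy := (abs_le.1 (hf x y hxy)).2
  have : 0 ≤ 2 / ε * dist x y := by positivity
  linarith

lemma localInfConvolution_le (hε : 0 < ε) (hf : ∀ x y, dist x y < ε → |f x - f y| ≤ 1)
    (hxy : dist x y < ε) : localInfConvolution ε f x ≤ f y + 2 / ε * dist x y := by
  refine ciInf_le (f := fun y : Metric.ball x ε ↦ f y + 2 / ε * dist x y) ⟨f x - 1, ?_⟩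
    ⟨y, Metric.mem_ball'.2 hxy⟩
  rintro _ ⟨⟨z, hz⟩, rfl⟩
  exact sub_one_le_add_dist hε hf (Metric.mem_ball'.1 hz)

lemma le_localInfConvolution (hε : 0 < ε) {c : ℝ}
    (h : ∀ y, dist x y < ε → c ≤ f y + 2 / ε * dist x y) : c ≤ localInfConvolution ε f x :=
  have : Nonempty (Metric.ball x ε) := ⟨⟨x, Metric.mem_ball_self hε⟩⟩
  le_ciInf fun y ↦ h y (Metric.mem_ball'.1 y.2)

lemma abs_localInfConvolution_sub_le_one (hε : 0 < ε)
    (hf : ∀ x y, dist x y < ε → |f x - f y| ≤ 1) (x : X) :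
    |localInfConvolution ε f x - f x| ≤ 1 := by
  have hle : localInfConvolution ε f x ≤ f x := by
    simpa using localInfConvolution_le hε hf (x := x) (y := x) (by simpa using hε)
  have hge : f x - 1 ≤ localInfConvolution ε f x :=
    le_localInfConvolution hε fun y hxy ↦ sub_one_le_add_dist hε hf hxy
  rw [abs_le]
  constructor <;> linarith

lemma localInfConvolution_le_add_dist (hε : 0 < ε)
    (hf : ∀ x y, dist x y < ε → |f x - f y| ≤ 1) (hxy : dist x y < ε / 2) :
    localInfConvolution ε f x ≤ localInfConvolution ε f y + 2 / ε * dist x y := by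
  rw [← sub_le_iff_le_add]
  refine le_localInfConvolution hε fun z hyz ↦ sub_le_iff_le_add.2 ?_
  rcases lt_or_ge (dist y z) (ε / 2) with hnear | hfar
  · have hxz : dist x z ≤ dist x y + dist y z := dist_triangle x y z
    calc localInfConvolution ε f x ≤ f z + 2 / ε * dist x z :=
          localInfConvolution_le hε hf (by linarith)
      _ ≤ f z + 2 / ε * (dist x y + dist y z) := by gcongr
      _ = f z + 2 / ε * dist y z + 2 / ε * dist x y := by ring
  · have hone : 1 ≤ 2 / ε * dist y z := by
      calc 1 = 2 / ε * (ε / 2) := by field_simp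
        _ ≤ 2 / ε * dist y z := by gcongr
    have hfyz := (abs_le.1 (hf y z hyz)).2
    calc localInfConvolution ε f x ≤ f y + 2 / ε * dist x y :=
          localInfConvolution_le hε hf (by linarith)
      _ ≤ f z + 2 / ε * dist y z + 2 / ε * dist x y := by linarith

lemma uniformContinuous_localInfConvolution (hε : 0 < ε)
    (hf : ∀ x y, dist x y < ε → |f x - f y| ≤ 1) :
    UniformContinuous (localInfConvolution ε f) := by
  refine Metric.uniformContinuous_iff.2 fun δ hδ ↦
    ⟨min (ε / 2) (ε / 2 * δ), by positivity, fun {x y} hxy ↦ ?_⟩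
  have hnear : dist x y < ε / 2 := hxy.trans_le (min_le_left _ _)
  have hsmall : 2 / ε * dist x y < δ := by
    calc 2 / ε * dist x y < 2 / ε * (ε / 2 * δ) := by gcongr; exact hxy.trans_le (min_le_right _ _)
      _ = δ := by field_simp
  have hle := localInfConvolution_le_add_dist hε hf hnear
  have hge := localInfConvolution_le_add_dist hε hf (dist_comm x y ▸ hnear)
  rw [dist_comm y x] at hge
  rw [Real.dist_eq, abs_lt]
  constructor <;> linarith

end LocalInfConvolution

section Uniformity

variable {X : Type*} [u : UniformSpace X] {V : Set (X × X)}

lemma exists_seq_symm_comp_subset (hV : V ∈ 𝓤 X) :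
    ∃ W : ℕ → SetRel X X, W 0 ⊆ V ∧
      ∀ n, W n ∈ 𝓤 X ∧ (W n).IsSymm ∧ W (n + 1) ○ W (n + 1) ⊆ W n := by
  have hhalf : ∀ A : {A : SetRel X X // A ∈ 𝓤 X ∧ A.IsSymm},
      ∃ B : {A : SetRel X X // A ∈ 𝓤 X ∧ A.IsSymm}, B.1 ○ B.1 ⊆ A.1 := by
    rintro ⟨A, hA, -⟩
    obtain ⟨B, hB, hBsymm, hBA⟩ := comp_symm_mem_uniformity_sets hA
    exact ⟨⟨B, hB, hBsymm⟩, hBA⟩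
  choose half hhalf using hhalf
  obtain ⟨A, hA, hAsymm, hAV⟩ := symm_of_uniformity hV
  let W (n : ℕ) := half^[n] ⟨A, hA, hAsymm⟩
  refine ⟨fun n ↦ (W n).1, hAV, fun n ↦ ⟨(W n).2.1, (W n).2.2, ?_⟩⟩
  simp only [W, Function.iterate_succ_apply']
  exact hhalf _

lemma exists_uniformSpace_isCountablyGenerated (hV : V ∈ 𝓤 X) :
    ∃ v : UniformSpace X, 𝓤[v].IsCountablyGenerated ∧ 𝓤[u] ≤ 𝓤[v] ∧ V ∈ 𝓤[v] := by
  obtain ⟨W, hWV, hW⟩ := exists_seq_symm_comp_subset hV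
  have hrefl (n : ℕ) (x : X) : (x, x) ∈ W n := refl_mem_uniformity (hW n).1
  have hanti : Antitone W := antitone_nat_of_succ_le fun n p hp ↦
    (hW n).2.2 ⟨p.2, hp, hrefl (n + 1) p.2⟩
  have hbasis : (⨅ n, 𝓟 (W n)).HasBasis (fun _ ↦ True) W :=
    hasBasis_iInf_principal hanti.directed_ge
  have hle : 𝓤[u] ≤ ⨅ n, 𝓟 (W n) := le_iInf fun n ↦ le_principal_iff.2 (hW n).1
  let v : UniformSpace X := .ofCore <| .mk' (⨅ n, 𝓟 (W n))
    (fun r hr x ↦ by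
      obtain ⟨n, -, hn⟩ := hbasis.mem_iff.1 hr
      exact hn (hrefl n x))
    (fun r hr ↦ by
      obtain ⟨n, -, hn⟩ := hbasis.mem_iff.1 hr
      exact hbasis.mem_iff.2 ⟨n, trivial, fun p hp ↦ hn ((hW n).2.1.symm _ _ hp)⟩)
    (fun r hr ↦ by
      obtain ⟨n, -, hn⟩ := hbasis.mem_iff.1 hr
      exact ⟨W (n + 1), hbasis.mem_of_mem trivial, (hW n).2.2.trans hn⟩)
  have hcount : (⨅ n, 𝓟 (W n)).IsCountablyGenerated := inferInstance
  exact ⟨v, hcount, hle, mem_of_superset (hbasis.mem_of_mem (i := 0) trivial) hWV⟩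

lemma exists_pseudoMetricSpace_uniformity_le (hV : V ∈ 𝓤 X) :
    ∃ I : PseudoMetricSpace X, 𝓤[u] ≤ 𝓤[I.toUniformSpace] ∧ V ∈ 𝓤[I.toUniformSpace] := by
  obtain ⟨v, hcount, hle, hVv⟩ := exists_uniformSpace_isCountablyGenerated hV
  obtain ⟨I, rfl⟩ := @UniformSpace.metrizable_uniformity X v hcount
  exact ⟨I, hle, hVv⟩

theorem exists_uniformContinuous_abs_sub_le_one (hV : V ∈ 𝓤 X) {f : X → ℝ}
    (hf : ∀ x y, (x, y) ∈ V → |f x - f y| ≤ 1) :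
    ∃ g : X → ℝ, UniformContinuous g ∧ ∀ x, |g x - f x| ≤ 1 := by
  obtain ⟨I, hle, hVI⟩ := exists_pseudoMetricSpace_uniformity_le hV
  obtain ⟨ε, hε, hεV⟩ := Metric.mem_uniformity_dist.1 hVI
  have hfε (x y : X) (hxy : dist x y < ε) : |f x - f y| ≤ 1 := hf x y (hεV hxy)
  exact ⟨localInfConvolution ε f, (uniformContinuous_localInfConvolution hε hfε).mono_left hle,
    abs_localInfConvolution_sub_le_one hε hfε⟩

lemma dissipate_mem_uniformity {U : ℕ → Set (X × X)} (hU : ∀ n, U n ∈ 𝓤 X) (n : ℕ) :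
    dissipate U n ∈ 𝓤 X :=
  (biInter_mem (finite_Iic n)).2 fun i _ ↦ hU i

end Uniformity

section NonIsolated

variable {X : Type*} {D : ℕ → Set (X × X)}

/-- The points of `X` that the relation `V` does not isolate. -/
def nonIsolated (V : Set (X × X)) : Set X :=
  {x | ball x V ≠ {x}}

lemma mem_nonIsolated_of_mem_of_ne {V : Set (X × X)} {x y : X} (hxy : (x, y) ∈ V) (hne : x ≠ y) :
    x ∈ nonIsolated V :=
  fun hball ↦ hne.symm (hball.subset hxy)

variable [UniformSpace X]

lemma nonIsolated_mono {V W : Set (X × X)} (hV : V ∈ 𝓤 X) (h : V ⊆ W) :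
    nonIsolated V ⊆ nonIsolated W := fun x hx hW ↦
  hx ((ball_mono h x |>.trans hW.subset).antisymm (singleton_subset_iff.2 (refl_mem_uniformity hV)))

lemma antitone_nonIsolated (hD : ∀ n, D n ∈ 𝓤 X) (hanti : Antitone D) :
    Antitone fun n ↦ nonIsolated (D n) :=
  fun _ n hmn ↦ nonIsolated_mono (hD n) (hanti hmn)

lemma unifIsolated_of_nonIsolated_subset {V : Set (X × X)} (hV : V ∈ 𝓤 X) {A : Set X}
    (h : nonIsolated V ⊆ A) : UnifIsolated (univ \ A) :=
  ⟨V, hV, fun _ hx ↦ by_contra fun hne ↦ hx.2 (h hne)⟩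

lemma exists_injective_forall_mem_of_infinite {α : Type*} {S : ℕ → Set α}
    (hS : ∀ n, (S n).Infinite) : ∃ a : ℕ → α, a.Injective ∧ ∀ n, a n ∈ S n := by
  classical
  choose t htS htcard using fun n ↦ (hS n).exists_subset_card_eq (n + 1)
  -- Hall's condition: the sets indexed by `s` include one with `max s + 1` elements.
  have hall (s : Finset ℕ) : s.card ≤ (s.biUnion t).card := by
    rcases s.eq_empty_or_nonempty with rfl | hs
    · simp
    calc s.card ≤ (Finset.range (s.max' hs + 1)).card :=
          Finset.card_le_card fun i hi ↦ Finset.mem_range_succ_iff.2 (s.le_max' i hi)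
      _ = (t (s.max' hs)).card := by rw [Finset.card_range, htcard]
      _ ≤ (s.biUnion t).card :=
          Finset.card_le_card (Finset.subset_biUnion_of_mem t (s.max'_mem hs))
  obtain ⟨a, hinj, hat⟩ := (Finset.all_card_le_biUnion_card_iff_exists_injective t).1 hall
  exact ⟨a, hinj, fun n ↦ htS n (hat n)⟩

lemma exists_finite_inter_nonIsolated (hD : ∀ n, D n ∈ 𝓤 X) (hanti : Antitone D)
    (hsub : ∀ A : Set X, A.Infinite → UnifIsolated A →
      ∃ C ⊆ A, C.Infinite ∧ ∃ n : ℕ, ∀ x ∈ C, ball x (D n) = {x})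
    {A : Set X} (hA : UnifIsolated A) : ∃ n, (A ∩ nonIsolated (D n)).Finite := by
  by_contra! hinf
  obtain ⟨a, hinj, ha⟩ := exists_injective_forall_mem_of_infinite hinf
  obtain ⟨V, hV, hVA⟩ := hA
  obtain ⟨C, hCa, hCinf, n, hC⟩ := hsub (range a) (infinite_range_of_injective hinj)
    ⟨V, hV, forall_mem_range.2 fun n ↦ hVA _ (ha n).1⟩
  refine hCinf (((finite_Iio n).image a).subset fun x hx ↦ ?_)
  obtain ⟨i, rfl⟩ := hCa hx
  exact mem_image_of_mem a <| not_le.1 fun hni ↦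
    antitone_nonIsolated hD hanti hni (ha i).2 (hC _ hx)

end NonIsolated

/-- Every uniformly continuous real-valued function is bounded on some term of the sequence. For an
antitone sequence this says that Bourbaki boundedness holds in the limit, although no single term
need be Bourbaki bounded. -/
def EventuallyBourbakiBounded {X : Type*} [UniformSpace X] (W : ℕ → Set X) : Prop :=
  ∀ f : X → ℝ, UniformContinuous f → ∃ (n : ℕ) (M : ℝ), ∀ x ∈ W n, |f x| ≤ M

lemma exists_forall_abs_le_of_finite {α : Type*} {A : Set α} (hA : A.Finite) (f : α → ℝ) :
    ∃ M : ℝ, ∀ x ∈ A, |f x| ≤ M := by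
  obtain ⟨M, hM⟩ := (hA.image fun x ↦ |f x|).bddAbove
  exact ⟨M, fun x hx ↦ hM (mem_image_of_mem _ hx)⟩

namespace EventuallyBourbakiBounded

variable {X : Type*} [UniformSpace X] {W : ℕ → Set X} {V : Set (X × X)}

lemma of_finite_inter (hfin : ∀ A : Set X, UnifIsolated A → ∃ n, (A ∩ W n).Finite)
    (h : ∀ V ∈ 𝓤 X, SymmRel V → ∃ (B : Set X) (n : ℕ), BourbakiBounded B ∧
      UnifIsolated (univ \ relImage (relIter V n) B)) :
    EventuallyBourbakiBounded W := by
  intro f hf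
  let V : Set (X × X) := {p | |f p.1 - f p.2| < 1}
  have hV : V ∈ 𝓤 X := hf (Metric.dist_mem_uniformity one_pos)
  have hVsymm : SymmRel V := fun x y ↦ by simp only [V, mem_ofPred_eq, abs_sub_comm]
  obtain ⟨B, k, hB, hiso⟩ := h V hV hVsymm
  obtain ⟨n, hn⟩ := hfin _ hiso
  obtain ⟨M, hM⟩ := hB f hf
  obtain ⟨M', hM'⟩ := exists_forall_abs_le_of_finite hn f
  refine ⟨n, max (M + (k + 1)) M', fun x hx ↦ ?_⟩
  by_cases hxB : x ∈ relImage (relIter V k) B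
  · obtain ⟨b, hb, hbx⟩ := mem_relImage.1 hxB
    have hstep : |f b - f x| ≤ k + 1 := abs_sub_le_of_mem_relIter (fun _ _ h ↦ le_of_lt h) hbx
    have htri : |f x| - |f b| ≤ |f b - f x| := abs_sub_comm (f x) (f b) ▸ abs_sub_abs_le_abs_sub _ _
    exact le_max_of_le_left (by linarith [hM b hb])
  · exact le_max_of_le_right (hM' x ⟨⟨mem_univ x, hxB⟩, hx⟩)

lemma exists_bound_of_abs_sub_le_one (hW : EventuallyBourbakiBounded W) (hV : V ∈ 𝓤 X) {f : X → ℝ}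
    (hf : ∀ x y, (x, y) ∈ V → |f x - f y| ≤ 1) : ∃ (n : ℕ) (M : ℝ), ∀ x ∈ W n, |f x| ≤ M := by
  obtain ⟨g, hg, hgf⟩ := exists_uniformContinuous_abs_sub_le_one hV hf
  obtain ⟨n, M, hM⟩ := hW g hg
  refine ⟨n, M + 1, fun x hx ↦ ?_⟩
  have htri : |f x| - |g x| ≤ |g x - f x| := abs_sub_comm (f x) (g x) ▸ abs_sub_abs_le_abs_sub _ _
  linarith [hM x hx, hgf x]

lemma bourbakiBounded_iUnion (hW : EventuallyBourbakiBounded W) (hanti : Antitone W)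
    {E : ℕ → Set X} (hE : ∀ n, (E n).Finite) (hEW : ∀ n, E n ⊆ W n) :
    BourbakiBounded (⋃ n, E n) := by
  intro f hf
  obtain ⟨n, M, hM⟩ := hW f hf
  obtain ⟨M', hM'⟩ :=
    exists_forall_abs_le_of_finite ((finite_Iio n).biUnion fun i _ ↦ hE i) f
  refine ⟨max M M', fun x hx ↦ ?_⟩
  obtain ⟨i, hi⟩ := mem_iUnion.1 hx
  rcases lt_or_ge i n with hin | hni
  · exact le_max_of_le_right (hM' x (mem_biUnion hin hi))
  · exact le_max_of_le_left (hM x (hanti hni (hEW i hi)))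

lemma bourbakiBounded_range (hW : EventuallyBourbakiBounded W) (hanti : Antitone W) {s : ℕ → X}
    (hs : ∀ n, s n ∈ W n) : BourbakiBounded (range s) := by
  rw [← iUnion_singleton_eq_range]
  exact hW.bourbakiBounded_iUnion hanti (fun n ↦ finite_singleton (s n))
    fun n ↦ singleton_subset_iff.2 (hs n)

lemma exists_finite_image_quotient_mk (hW : EventuallyBourbakiBounded W) (hanti : Antitone W)
    (hV : V ∈ 𝓤 X) :
    ∃ n, (Quotient.mk (Relation.EqvGen.setoid fun x y ↦ (x, y) ∈ V) '' W n).Finite := by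
  by_contra! hinf
  obtain ⟨c, hinj, hc⟩ := exists_injective_forall_mem_of_infinite hinf
  choose a haW hac using hc
  let g := Function.extend c (fun n ↦ (n : ℝ)) 0
  let f (x : X) : ℝ := g (Quotient.mk _ x)
  have hfa (n : ℕ) : f (a n) = n := by
    simp only [f, g, hac, hinj.extend_apply]
  have hfV (x y : X) (hxy : (x, y) ∈ V) : f x = f y :=
    congrArg g (Quotient.sound (s := Relation.EqvGen.setoid _) (Relation.EqvGen.rel x y hxy))
  obtain ⟨n, M, hM⟩ := hW.exists_bound_of_abs_sub_le_one hV (f := f) fun x y hxy ↦ by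
    simp [hfV x y hxy]
  obtain ⟨k, hk⟩ := exists_nat_gt M
  have hle : ((max n k : ℕ) : ℝ) ≤ M :=
    (hfa (max n k)).symm.trans_le <|
      (le_abs_self _).trans (hM _ (hanti (le_max_left n k) (haW (max n k))))
  exact absurd (hk.trans_le (Nat.cast_le.2 (le_max_right n k))) hle.not_gt

lemma eventually_exists_finite_eqvGen (hW : EventuallyBourbakiBounded W) (hanti : Antitone W)
    (hV : V ∈ 𝓤 X) : ∀ᶠ n in atTop, ∃ E ⊆ W n, E.Finite ∧
      ∀ x ∈ W n, ∃ e ∈ E, Relation.EqvGen (fun x y ↦ (x, y) ∈ V) e x := by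
  obtain ⟨m, hm⟩ := hW.exists_finite_image_quotient_mk hanti hV
  filter_upwards [eventually_ge_atTop m] with n hn
  obtain ⟨E, hEW, hE⟩ :=
    exists_subset_bijOn (W n) (Quotient.mk (Relation.EqvGen.setoid fun x y ↦ (x, y) ∈ V))
  refine ⟨E, hEW, hE.finite_iff_finite.2 (hm.subset (image_mono (hanti hn))), fun x hx ↦ ?_⟩
  obtain ⟨e, he, hex⟩ := hE.surjOn (mem_image_of_mem _ hx)
  exact ⟨e, he, Quotient.exact hex⟩

variable {D : ℕ → Set (X × X)}

lemma exists_relImage_subset (hW : EventuallyBourbakiBounded fun n ↦ nonIsolated (D n))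
    (hD : ∀ n, D n ∈ 𝓤 X) (hanti : Antitone D)
    (habsorb : ∀ B : Set X, BourbakiBounded B → ∃ n m, relImage (D n) B ⊆ relImage (relIter V m) B)
    {K : Set X} (hK : relImage V K ⊆ K) : ∃ n, relImage (D n) K ⊆ K := by
  by_contra! hcon
  choose t ht htK using fun n ↦ not_subset.1 (hcon n)
  choose s hsK hst using fun n ↦ mem_relImage.1 (ht n)
  have hs (n : ℕ) : s n ∈ nonIsolated (D n) :=
    mem_nonIsolated_of_mem_of_ne (hst n) fun heq ↦ htK n (heq ▸ hsK n)
  obtain ⟨n, m, hnm⟩ :=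
    habsorb _ (hW.bourbakiBounded_range (antitone_nonIsolated hD hanti) hs)
  have htn : t n ∈ relImage (relIter V m) (range s) :=
    hnm (mem_relImage.2 ⟨s n, mem_range_self n, hst n⟩)
  obtain ⟨x, ⟨i, rfl⟩, hxt⟩ := mem_relImage.1 htn
  exact htK n (relImage_relIter_subset_of_relImage_subset hK m
    (mem_relImage.2 ⟨s i, hsK i, hxt⟩))

lemma exists_subset_relImage_relIter (hW : EventuallyBourbakiBounded W) (hanti : Antitone W)
    (hV : V ∈ 𝓤 X) (hVsymm : SymmRel V) {F : Set X} {p : ℕ}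
    (hreach : W p ⊆ ⋃ n, relImage (relIter V n) F) :
    ∃ n q, W q ⊆ relImage (relIter V n) F := by
  obtain ⟨q, M, hM⟩ := hW.exists_bound_of_abs_sub_le_one hV
    fun x y ↦ abs_chainLevel_sub_le_one (F := F) hVsymm
  obtain ⟨n, hn⟩ := exists_nat_ge M
  refine ⟨n, max p q, fun x hx ↦ ?_⟩
  have hlevel : (chainLevel V F x : ℝ) ≤ n :=
    (le_abs_self _).trans ((hM x (hanti (le_max_right p q) hx)).trans hn)
  exact mem_relImage_relIter_of_chainLevel_le (fun _ ↦ refl_mem_uniformity hV)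
    (hreach (hanti (le_max_left p q) hx)) (Nat.cast_le.1 hlevel)

theorem exists_bourbakiBounded (hW : EventuallyBourbakiBounded fun n ↦ nonIsolated (D n))
    (hD : ∀ n, D n ∈ 𝓤 X) (hDsymm : ∀ n, SymmRel (D n)) (hanti : Antitone D)
    (habsorb : ∀ B : Set X, BourbakiBounded B → ∀ V ∈ 𝓤 X,
      ∃ n m, relImage (D n) B ⊆ relImage (relIter V m) B) :
    ∃ F : Set X, BourbakiBounded F ∧ ∀ V ∈ 𝓤 X, SymmRel V →
      ∃ n q, nonIsolated (D q) ⊆ relImage (relIter V n) F := by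
  have hWanti := antitone_nonIsolated hD hanti
  have hreps (k : ℕ) := ((hW.eventually_exists_finite_eqvGen hWanti (hD k)).and
    (eventually_ge_atTop k)).exists
  choose p hreps hp using hreps
  choose E hEW hEfin hE using hreps
  refine ⟨⋃ k, E k, hW.bourbakiBounded_iUnion hWanti hEfin
    fun k ↦ (hEW k).trans (hWanti (hp k)), fun V hV hVsymm ↦ ?_⟩
  obtain ⟨j, hj⟩ := hW.exists_relImage_subset hD hanti (habsorb · · V hV)
    (relImage_iUnion_relImage_relIter_subset (F := ⋃ k, E k))
  refine hW.exists_subset_relImage_relIter hWanti hV hVsymm (p := p j) fun x hx ↦ ?_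
  obtain ⟨e, he, hex⟩ := hE j x hx
  have heF := subset_relImage_relIter (fun _ ↦ refl_mem_uniformity hV) 0 (mem_iUnion_of_mem j he)
  exact (mem_iff_mem_of_eqvGen (hDsymm j) hj hex).1 (mem_iUnion_of_mem 0 heF)

end EventuallyBourbakiBounded

theorem stmt9 {X : Type*} [UniformSpace X]
    (h : ∀ U ∈ uniformity X, SymmRel U →
      ∃ (B : Set X) (n : ℕ), BourbakiBounded B ∧
        UnifIsolated (Set.univ \ relImage (relIter U n) B))
    (U : ℕ → Set (X × X))
    (hU : ∀ n : ℕ, U n ∈ uniformity X ∧ SymmRel (U n))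
    (h1 : ∀ A : Set X, A.Infinite → UnifIsolated A →
      ∃ C ⊆ A, C.Infinite ∧ ∃ n : ℕ, ∀ x ∈ C, UniformSpace.ball x (U n) = {x})
    (h2 : ∀ B : Set X, BourbakiBounded B → ∀ V ∈ uniformity X,
      ∃ n m : ℕ,
        UnifIsolated (relImage (U n) B \ relImage (relIter V m) B) ∧
        relImage (U n) (relImage (U n) B \ relImage (relIter V m) B) ⊆
          relImage (U n) B \ relImage (relIter V m) B) :
    ∃ F : Set X, BourbakiBounded F ∧
      ∀ V ∈ uniformity X, ∃ n : ℕ,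
        UnifIsolated (Set.univ \ relImage (relIter V n) F) := by
  let D := dissipate U
  have hD (n : ℕ) : D n ∈ 𝓤 X := dissipate_mem_uniformity (fun i ↦ (hU i).1) n
  have hDsymm (n : ℕ) : SymmRel (D n) := SymmRel.dissipate (fun i ↦ (hU i).2) n
  have hDU (n : ℕ) : D n ⊆ U n := dissipate_subset le_rfl
  have hfin (A : Set X) (hA : UnifIsolated A) : ∃ n, (A ∩ nonIsolated (D n)).Finite := by
    refine exists_finite_inter_nonIsolated hD antitone_dissipate (fun A hAinf hA ↦ ?_) hA
    obtain ⟨C, hCA, hCinf, n, hC⟩ := h1 A hAinf hA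
    exact ⟨C, hCA, hCinf, n, fun x hx ↦
      by_contra fun hne ↦ nonIsolated_mono (hD n) (hDU n) hne (hC x hx)⟩
  have habsorb (B : Set X) (hB : BourbakiBounded B) (V : Set (X × X)) (hV : V ∈ 𝓤 X) :
      ∃ n m, relImage (D n) B ⊆ relImage (relIter V m) B := by
    obtain ⟨n, m, -, hclosed⟩ := h2 B hB V hV
    exact ⟨n, m, (relImage_mono_left (hDU n)).trans <| relImage_subset_of_relImage_diff_subset
      (hU n).2 (subset_relImage_relIter (fun _ ↦ refl_mem_uniformity hV) m) hclosed⟩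
  obtain ⟨F, hF, hFV⟩ := (EventuallyBourbakiBounded.of_finite_inter hfin h).exists_bourbakiBounded
    hD hDsymm antitone_dissipate habsorb
  refine ⟨F, hF, fun V hV ↦ ?_⟩
  obtain ⟨n, q, hq⟩ := hFV _ (symmetrize_mem_uniformity hV) (symmRel_symmetrize V)
  exact ⟨n, unifIsolated_of_nonIsolated_subset (hD q) <| hq.trans <|
    relImage_mono_left (relIter_mono_left SetRel.symmetrize_subset_self n)⟩
end
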